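/- For each n∈ℕ let G_n=(V_n,E_n,w_n) be an undirected d_n-regular tree with hierarchical edge weights (edges in the same generation have equal weight and weights are non-decreasing in the generation). For each n let x_n,y_n∈V_n be vertices such that x_n is the parent of y_n and such that the minimal distance between y_n and a leaf of G_n is a constant k, independent of n; let e_n denote the edge between x_n and y_n, and let q_n>0 be the intensity parameter. Then as n→∞, U_{q_n}^{(G_n)}(x_n,y_n) converges to 0 if q_n = o( d_n^{−k}·w_n(e_n) ), and converges to 1 if q_n = ω( d_n^{−k}·w_n(e_n) ). -/

import Mathlib

open Classical Finset Filter

noncomputable section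

variable {V : Type*} [Fintype V] [DecidableEq V]

/-- One step of following the parent map of a rooted forest. -/
def fstep (f : V → Option V) : Option V → Option V := fun o => o.bind f

/-- `f : V → Option V` encodes a spanning rooted forest structure: every vertex either is a
root (`f x = none`) or points to its parent, and iterating the parent map from any vertex
eventually reaches a root (i.e. there are no cycles). -/
def IsForest (f : V → Option V) : Prop :=
  ∀ x : V, ∃ n : ℕ, (fstep f)^[n] (some x) = none

/-- `f` is a spanning rooted forest of the directed graph with edge relation `E`:
all its (parent-pointing) edges are edges of the graph. -/
def IsRForest (E : V → V → Prop) (f : V → Option V) : Prop :=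
  IsForest f ∧ ∀ x y : V, f x = some y → E x y

/-- The number of roots (equivalently, of trees) of a rooted forest. -/
def nRoots (f : V → Option V) : ℕ := (univ.filter fun x : V => f x = none).card

/-- The weight `w(F) = ∏_{e ∈ F} w(e)` of a rooted forest. -/
def fWeight (w : V → V → ℝ) (f : V → Option V) : ℝ :=
  ∏ x : V, (f x).elim 1 (fun y => w x y)

/-- Non-normalised forest measure of a set `H` of forests: `∑_{F ∈ H} q^{r(F)} w(F)`,
the sum running over spanning rooted forests of the graph belonging to `H`. -/
def fMeasure (E : V → V → Prop) (w : V → V → ℝ) (q : ℝ) (H : Set (V → Option V)) : ℝ :=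
  ∑ f ∈ univ.filter (fun f : V → Option V => IsRForest E f ∧ f ∈ H),
    q ^ nRoots f * fWeight w f

/-- Partition function `Z(q) = ∑_F q^{r(F)} w(F)`. -/
def Zf (E : V → V → Prop) (w : V → V → ℝ) (q : ℝ) : ℝ := fMeasure E w q Set.univ

/-- Probability `P(Φ_q ∈ H)` for the random spanning rooted forest `Φ_q`. -/
def fProb (E : V → V → Prop) (w : V → V → ℝ) (q : ℝ) (H : Set (V → Option V)) : ℝ :=
  fMeasure E w q H / Zf E w q

/-- Ancestor relation in the forest `f`. -/
def anc (f : V → Option V) : V → V → Prop :=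
  Relation.ReflTransGen (fun a b => f a = some b)

/-- `x` and `y` belong to the same tree of the forest `f` (they have a common ancestor). -/
def SameTree (f : V → Option V) (x y : V) : Prop := ∃ z, anc f x z ∧ anc f y z

/-- Two-point correlation `U_q(x,y)`: the probability that `x` and `y` lie in
different trees of `Φ_q`. -/
def Ucorr (E : V → V → Prop) (w : V → V → ℝ) (q : ℝ) (x y : V) : ℝ :=
  fProb E w q {f | ¬ SameTree f x y}

end

/-!
On a tree, a parent map is a rooted forest as soon as it never runs back and forth along an edge.
Hence edges of a forest may be added and removed locally, and forest measures obey the laws of the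
electrical network in which an edge `e` has conductance `τ e = w e / q` and every vertex is grounded
by a unit conductance. If `κ(p, v)` is the conductance to the ground of the branch hanging from `v`
away from its neighbour `p`, then `κ(p, v) = 1 + ∑ τ κ(v, c) / (τ + κ(v, c))`, the sum being over
the neighbours `c ≠ p` of `v` and `τ` being that of the edge `vc`. For an edge `xy` with `τ = t`,
the correlation is given by `1 / U(x, y) = 1 + t / κ(x, y) + t / κ(y, x)`.

Bounding each summand by `κ(v, c)` gives `κ(x, y) ≤ 1 + d + ⋯ + d ^ k`, whence `U → 0` when
`t / d ^ k → ∞`. Conversely, since the edges below `xy` have `τ ≥ t`, induction along the `k`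
generations below `y` gives `t / κ(x, y) ≤ k / d + t / d ^ k`, and the siblings of `y` likewise make
`t / κ(y, x)` of order `1 / d + t / d ^ k`. When `t / d ^ k → 0` this is small if `d` is large,
while for smaller `d` the trivial bound `t / κ ≤ t` suffices.
-/

section ForestMeasure

variable {V : Type*} [Fintype V] [DecidableEq V] {E : V → V → Prop} {w : V → V → ℝ} {q : ℝ}

omit [DecidableEq V] in
theorem pow_nRoots_mul_fWeight (w : V → V → ℝ) (q : ℝ) (f : V → Option V) :
    q ^ nRoots f * fWeight w f = ∏ x, (f x).elim q (w x) := by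
  have hroots : q ^ nRoots f = ∏ x, if f x = none then q else 1 := by
    rw [Finset.prod_ite]; simp [nRoots]
  rw [hroots, fWeight, ← Finset.prod_mul_distrib]
  refine Finset.prod_congr rfl fun x _ => ?_
  cases f x <;> simp

theorem fMeasure_eq_sum_prod (E : V → V → Prop) (w : V → V → ℝ) (q : ℝ) (S : Set (V → Option V)) :
    fMeasure E w q S = ∑ f with IsRForest E f ∧ f ∈ S, ∏ x, (f x).elim q (w x) :=
  Finset.sum_congr rfl fun _ _ => pow_nRoots_mul_fWeight ..

theorem fMeasure_congr {S T : Set (V → Option V)} (h : ∀ f, IsRForest E f → (f ∈ S ↔ f ∈ T)) :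
    fMeasure E w q S = fMeasure E w q T :=
  Finset.sum_congr (Finset.filter_congr fun f _ => and_congr_right (h f)) fun _ _ => rfl

theorem fMeasure_eq_zero {S : Set (V → Option V)} (h : ∀ f, IsRForest E f → f ∉ S) :
    fMeasure E w q S = 0 :=
  Finset.sum_eq_zero fun f hf =>
    have ⟨hforest, hfS⟩ := (Finset.mem_filter.1 hf).2
    absurd hfS (h f hforest)

theorem fMeasure_add_not (P : (V → Option V) → Prop) (S : Set (V → Option V)) :
    fMeasure E w q {f | P f ∧ f ∈ S} + fMeasure E w q {f | ¬ P f ∧ f ∈ S} = fMeasure E w q S := by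
  simp only [fMeasure, Finset.sum_filter, ← Finset.sum_add_distrib]
  refine Finset.sum_congr rfl fun f _ => ?_
  by_cases hP : P f <;> simp [hP]

theorem fMeasure_eq_none_add_sum_some (v : V) (S : Set (V → Option V)) :
    fMeasure E w q S = fMeasure E w q {f | f v = none ∧ f ∈ S} +
      ∑ c, fMeasure E w q {f | f v = some c ∧ f ∈ S} := by
  rw [← Fintype.sum_option (fun o => fMeasure E w q {f | f v = o ∧ f ∈ S})]
  simp only [fMeasure, Finset.sum_filter]
  rw [Finset.sum_comm]
  refine Finset.sum_congr rfl fun f _ => ?_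
  simp only [Set.mem_ofPred_eq, and_left_comm (b := f v = _), ite_and, Finset.sum_ite_eq,
    Finset.mem_univ, if_true]

theorem prod_elim_update_some (w : V → V → ℝ) (hq : q ≠ 0) {f : V → Option V} {v : V}
    (hv : f v = none) (c : V) :
    ∏ x, (Function.update f v (some c) x).elim q (w x) =
      w v c / q * ∏ x, (f x).elim q (w x) := by
  rw [← Finset.mul_prod_erase univ _ (Finset.mem_univ v),
    ← Finset.mul_prod_erase univ (fun x => (f x).elim q (w x)) (Finset.mem_univ v), ← mul_assoc]
  congr 1
  · simp [hv, hq]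
  · refine Finset.prod_congr rfl fun x hx => ?_
    rw [Function.update_of_ne (Finset.ne_of_mem_erase hx)]

omit [DecidableEq V] in
theorem IsRForest.prod_elim_nonneg (hw : ∀ u v, E u v → 0 ≤ w u v) (hq : 0 ≤ q)
    {f : V → Option V} (hf : IsRForest E f) : 0 ≤ ∏ x, (f x).elim q (w x) := by
  refine Finset.prod_nonneg fun x _ => ?_
  cases hx : f x with
  | none => exact hq
  | some y => exact hw x y (hf.2 x y hx)

theorem fMeasure_mono (hw : ∀ u v, E u v → 0 ≤ w u v) (hq : 0 ≤ q) {S T : Set (V → Option V)}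
    (hST : S ⊆ T) : fMeasure E w q S ≤ fMeasure E w q T := by
  rw [fMeasure_eq_sum_prod, fMeasure_eq_sum_prod]
  exact Finset.sum_le_sum_of_subset_of_nonneg
    (Finset.monotone_filter_right _ fun f _ hf => ⟨hf.1, hST hf.2⟩)
    fun f hf _ => (Finset.mem_filter.1 hf).2.1.prod_elim_nonneg hw hq

theorem fMeasure_pos (hw : ∀ u v, E u v → 0 ≤ w u v) (hq : 0 < q) {S : Set (V → Option V)}
    (hS : (fun _ => none) ∈ S) : 0 < fMeasure E w q S := by
  rw [fMeasure_eq_sum_prod]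
  refine Finset.sum_pos' (fun f hf => (Finset.mem_filter.1 hf).2.1.prod_elim_nonneg hw hq.le)
    ⟨fun _ => none, ?_, Finset.prod_pos fun _ _ => hq⟩
  exact Finset.mem_filter.2 ⟨Finset.mem_univ _, ⟨fun _ => ⟨1, rfl⟩, fun _ _ h => nomatch h⟩, hS⟩

end ForestMeasure

section Branches

variable {V : Type*} {G : SimpleGraph V}

theorem eq_of_adj_of_dist_eq_add_one (hG : G.IsTree) {a v p p' : V} (hp : G.Adj p v)
    (hp' : G.Adj p' v) (h : G.dist a v = G.dist a p + 1) (h' : G.dist a v = G.dist a p' + 1) :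
    p = p' := by
  obtain ⟨P, hP⟩ := hG.connected.exists_walk_length_eq_dist a p
  obtain ⟨P', hP'⟩ := hG.connected.exists_walk_length_eq_dist a p'
  have hpath : (P.concat hp).IsPath :=
    SimpleGraph.Walk.isPath_of_length_eq_dist _ (by rw [SimpleGraph.Walk.length_concat]; omega)
  have hpath' : (P'.concat hp').IsPath :=
    SimpleGraph.Walk.isPath_of_length_eq_dist _ (by rw [SimpleGraph.Walk.length_concat]; omega)
  simpa using congrArg SimpleGraph.Walk.penultimate
    ((hG.existsUnique_path a v).unique hpath hpath')

/-- For adjacent vertices `p` and `v` of a tree, the component of `v` after deletion of the edge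
`pv`. -/
def branch (G : SimpleGraph V) (p v : V) : Set V :=
  {z | G.dist p z = G.dist v z + 1}

theorem mem_branch_self {p v : V} (h : G.Adj p v) : v ∈ branch G p v := by
  simp [branch, SimpleGraph.dist_eq_one_iff_adj.2 h]

theorem left_notMem_branch (p v : V) : p ∉ branch G p v := by
  simp [branch]

theorem branch_ssubset_branch (hG : G.IsTree) {p v c : V} (hp : G.Adj p v) (hc : G.Adj v c)
    (hne : c ≠ p) : branch G v c ⊂ branch G p v := by
  refine (Set.ssubset_iff_of_subset fun z hz => ?_).2
    ⟨v, mem_branch_self hp, left_notMem_branch v c⟩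
  have hz' : G.dist z v = G.dist z c + 1 := by simpa [branch, G.dist_comm] using hz
  rcases hG.dist_eq_dist_add_one_of_adj z hp with h | h
  · simpa [branch, G.dist_comm] using h
  · exact absurd (eq_of_adj_of_dist_eq_add_one hG hc.symm hp hz' h) hne

-- A path that never backtracks enters strictly smaller branches, so it must end at a root.
theorem isRForest_adj_iff [Finite V] (hG : G.IsTree) {f : V → Option V} :
    IsRForest G.Adj f ↔ ∀ u v, f u = some v → G.Adj u v ∧ f v ≠ some u := by
  constructor
  · refine fun hf u v huv => ⟨hf.2 u v huv, fun hvu => ?_⟩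
    have hcycle : ∀ n, (fstep f)^[n] (some u) ≠ none ∧ (fstep f)^[n] (some v) ≠ none := by
      intro n
      induction n with
      | zero => simp
      | succ n ih => simpa [fstep, huv, hvu] using ih.symm
    obtain ⟨n, hn⟩ := hf.1 u
    exact (hcycle n).1 hn
  · refine fun hf => ⟨fun u => ?_, fun u v huv => (hf u v huv).1⟩
    have hterm : ∀ m, ∀ p v, f p = some v → (branch G p v).ncard = m →
        ∃ n, (fstep f)^[n] (some v) = none := by
      intro m
      induction m using Nat.strong_induction_on with
      | _ m ih =>
      rintro p v hpv rfl
      cases hv : f v with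
      | none => exact ⟨1, hv⟩
      | some c =>
        have hcp : c ≠ p := fun h => (hf p v hpv).2 (h ▸ hv)
        have hlt := Set.ncard_lt_ncard (branch_ssubset_branch hG (hf p v hpv).1 (hf v c hv).1 hcp)
        obtain ⟨n, hn⟩ := ih _ hlt v c hv rfl
        exact ⟨n + 1, by simpa [fstep, hv] using hn⟩
    cases hu : f u with
    | none => exact ⟨1, hu⟩
    | some v =>
      obtain ⟨n, hn⟩ := hterm _ u v hu rfl
      exact ⟨n + 1, by simpa [fstep, hu] using hn⟩

theorem IsRForest.update_none [Finite V] [DecidableEq V] (hG : G.IsTree) {f : V → Option V}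
    (hf : IsRForest G.Adj f) (v : V) : IsRForest G.Adj (Function.update f v none) := by
  rw [isRForest_adj_iff hG] at hf ⊢
  intro a b hab
  rcases eq_or_ne a v with rfl | ha
  · simp at hab
  · rw [Function.update_of_ne ha] at hab
    rcases eq_or_ne b v with rfl | hb
    · simpa using (hf a b hab).1
    · simpa only [Function.update_of_ne hb] using hf a b hab

theorem IsRForest.update_some [Finite V] [DecidableEq V] (hG : G.IsTree) {f : V → Option V}
    (hf : IsRForest G.Adj f) {v c : V} (hvc : G.Adj v c) (hcv : f c ≠ some v) :
    IsRForest G.Adj (Function.update f v (some c)) := by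
  rw [isRForest_adj_iff hG] at hf ⊢
  intro a b hab
  rcases eq_or_ne a v with rfl | ha
  · obtain rfl : c = b := by simpa using hab
    exact ⟨hvc, by rwa [Function.update_of_ne hvc.ne']⟩
  · rw [Function.update_of_ne ha] at hab
    rcases eq_or_ne b v with rfl | hb
    · refine ⟨(hf a b hab).1, ?_⟩
      rw [Function.update_self]
      intro h
      obtain rfl := Option.some_injective _ h
      exact hcv hab
    · simpa only [Function.update_of_ne hb] using hf a b hab

theorem eq_some_of_sameTree (hG : G.IsAcyclic) {f : V → Option V}
    (hf : ∀ u v, f u = some v → G.Adj u v) {x y : V} (hxy : G.Adj x y) (h : SameTree f x y) :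
    f x = some y ∨ f y = some x := by
  by_contra! hne
  have reachable_of_anc : ∀ {u v}, anc f u v → (G.deleteEdges {s(x, y)}).Reachable u v := by
    intro u v huv
    induction huv with
    | refl => rfl
    | @tail b c _ hbc ih =>
      refine ih.trans (SimpleGraph.Adj.reachable (SimpleGraph.deleteEdges_adj.2 ⟨hf _ _ hbc, ?_⟩))
      rw [Set.mem_singleton_iff, Sym2.eq_iff]
      rintro (⟨rfl, rfl⟩ | ⟨rfl, rfl⟩)
      · exact hne.1 hbc
      · exact hne.2 hbc
  obtain ⟨z, hxz, hyz⟩ := h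
  exact SimpleGraph.isBridge_iff.1 (SimpleGraph.isAcyclic_iff_forall_adj_isBridge.1 hG hxy)
    ((reachable_of_anc hxz).trans (reachable_of_anc hyz).symm)

end Branches

section Conductance

variable {V : Type*} [Fintype V] [DecidableEq V] {G : SimpleGraph V} {w : V → V → ℝ} {q : ℝ}

omit [Fintype V] in
theorem update_mem_iff_of_dependsOn {S : Set (V → Option V)} {v : V}
    (hS : DependsOn (· ∈ S) {v}ᶜ) (f : V → Option V) (o : Option V) :
    Function.update f v o ∈ S ↔ f ∈ S :=
  iff_of_eq (hS fun _ hu => Function.update_of_ne hu _ _)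

omit [Fintype V] [DecidableEq V] in
theorem dependsOn_eq_none_and {S : Set (V → Option V)} {T T' : Set V} (hS : DependsOn (· ∈ S) Tᶜ)
    (hT : T' ⊆ T) {v : V} (hv : v ∉ T') : DependsOn (· ∈ {f | f v = none ∧ f ∈ S}) T'ᶜ := by
  intro f g hfg
  have hmem : (f ∈ S) = (g ∈ S) := hS fun u hu => hfg u fun h => hu (hT h)
  simp only [Set.mem_ofPred_eq, hfg v hv, hmem]

-- Removing the edge `vc` makes `v` a root; the 2-cycle `v → c → v` is the only obstruction to
-- adding it back.
theorem fMeasure_eq_some (hG : G.IsTree) (hq : q ≠ 0) {v c : V} (hvc : G.Adj v c)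
    {S : Set (V → Option V)} (hS : DependsOn (· ∈ S) {v}ᶜ) :
    fMeasure G.Adj w q {f | f v = some c ∧ f ∈ S} =
      w v c / q * fMeasure G.Adj w q {f | f c ≠ some v ∧ f v = none ∧ f ∈ S} := by
  rw [fMeasure_eq_sum_prod, fMeasure_eq_sum_prod, Finset.mul_sum]
  have hmem := update_mem_iff_of_dependsOn hS
  refine Finset.sum_nbij' (fun f => Function.update f v none)
    (fun f => Function.update f v (some c)) ?_ ?_ ?_ ?_ ?_
  · intro f hf
    simp only [Finset.mem_filter, Finset.mem_univ, true_and, Set.mem_ofPred_eq] at hf ⊢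
    refine ⟨hf.1.update_none hG v, ?_, Function.update_self .., (hmem ..).2 hf.2.2⟩
    rw [Function.update_of_ne hvc.ne']
    exact ((isRForest_adj_iff hG).1 hf.1 v c hf.2.1).2
  · intro f hf
    simp only [Finset.mem_filter, Finset.mem_univ, true_and, Set.mem_ofPred_eq] at hf ⊢
    exact ⟨hf.1.update_some hG hvc hf.2.1, Function.update_self .., (hmem ..).2 hf.2.2.2⟩
  · intro f hf
    simp only [Finset.mem_filter, Set.mem_ofPred_eq] at hf
    rw [Function.update_idem, ← hf.2.2.1, Function.update_eq_self]
  · intro f hf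
    simp only [Finset.mem_filter, Set.mem_ofPred_eq] at hf
    rw [Function.update_idem, ← hf.2.2.2.1, Function.update_eq_self]
  · intro f hf
    simp only [Finset.mem_filter, Set.mem_ofPred_eq] at hf
    rw [← prod_elim_update_some w hq (Function.update_self v none f) c, Function.update_idem,
      ← hf.2.2.1, Function.update_eq_self]

/-- Effective conductance to the ground, seen from `v`, of the branch of `v` away from `p`, when
every edge `e` has conductance `w e / q` and every vertex is grounded by a unit conductance. It is
encoded as the ratio of the measure of the forests not using `v → p` to that of the forests rooted
at `v`; the ratio does not change when conditioning on the forest outside the branch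
(`fMeasure_ne_some`). -/
noncomputable def branchConductance (G : SimpleGraph V) (w : V → V → ℝ) (q : ℝ) (p v : V) : ℝ :=
  fMeasure G.Adj w q {f | f v ≠ some p} / fMeasure G.Adj w q {f | f v = none}

theorem one_le_branchConductance (hw : ∀ u v, G.Adj u v → 0 ≤ w u v) (hq : 0 < q) (p v : V) :
    1 ≤ branchConductance G w q p v := by
  rw [branchConductance, one_le_div (fMeasure_pos hw hq (by rfl))]
  exact fMeasure_mono hw hq.le fun f (hf : f v = none) => by simp [hf]

theorem branchConductance_pos (hw : ∀ u v, G.Adj u v → 0 ≤ w u v) (hq : 0 < q) (p v : V) :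
    0 < branchConductance G w q p v :=
  one_pos.trans_le (one_le_branchConductance hw hq p v)

variable (hG : G.IsTree) (hsymm : ∀ u v, w u v = w v u) (hw : ∀ u v, G.Adj u v → 0 ≤ w u v)
  (hq : 0 < q)

include hG hsymm hw hq

-- The series law: the edge `vc` followed by the conductance `κ`.
theorem fMeasure_eq_some_of_ne_some {v c : V} (hvc : G.Adj v c)
    {S : Set (V → Option V)} (hS : DependsOn (· ∈ S) {v, c}ᶜ) {κ : ℝ} (hκ : 0 < κ)
    (hc : fMeasure G.Adj w q {f | f c ≠ some v ∧ f v = none ∧ f ∈ S} =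
      κ * fMeasure G.Adj w q {f | f c = none ∧ f v = none ∧ f ∈ S}) :
    fMeasure G.Adj w q {f | f v = some c ∧ f ∈ S} =
      w v c / q * κ / (w v c / q + κ) * fMeasure G.Adj w q {f | f v = none ∧ f ∈ S} := by
  have hSv : DependsOn (· ∈ S) {v}ᶜ := hS.mono (by simp)
  have hSc : DependsOn (· ∈ {f | f v = none ∧ f ∈ S}) {c}ᶜ :=
    dependsOn_eq_none_and hS (by simp) hvc.ne
  have hcv : fMeasure G.Adj w q {f | f c = some v ∧ f v = none ∧ f ∈ S} =
      w v c / q * fMeasure G.Adj w q {f | f c = none ∧ f v = none ∧ f ∈ S} := by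
    refine (fMeasure_eq_some hG hq.ne' hvc.symm hSc).trans ?_
    rw [hsymm c v]
    congr 2
    ext f
    simp only [Set.mem_ofPred_eq]
    exact ⟨And.right, fun h => ⟨by simp [h.2.1], h⟩⟩
  have hroot := fMeasure_add_not (E := G.Adj) (w := w) (q := q) (fun f => f c = some v)
    {f | f v = none ∧ f ∈ S}
  simp only [Set.mem_ofPred_eq, ← ne_eq, hcv, hc, ← add_mul] at hroot
  have hpos : 0 < w v c / q + κ := add_pos_of_nonneg_of_pos (div_nonneg (hw v c hvc) hq.le) hκ
  rw [fMeasure_eq_some hG hq.ne' hvc hSv, hc, ← hroot, ← mul_assoc, ← mul_assoc,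
    div_mul_cancel₀ _ hpos.ne']

-- The parallel law: the unit ground at `v` and the conductances through its neighbours add up.
theorem fMeasure_ne_some_of_forall {p v : V} (hpv : G.Adj p v) {κ : V → ℝ}
    (hκ : ∀ c, 0 < κ c)
    (hbranch : ∀ c ∈ (G.neighborFinset v).erase p, ∀ S : Set (V → Option V),
      DependsOn (· ∈ S) (branch G v c)ᶜ →
      fMeasure G.Adj w q {f | f c ≠ some v ∧ f ∈ S} =
        κ c * fMeasure G.Adj w q {f | f c = none ∧ f ∈ S})
    {S : Set (V → Option V)} (hS : DependsOn (· ∈ S) (branch G p v)ᶜ) :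
    fMeasure G.Adj w q {f | f v ≠ some p ∧ f ∈ S} =
      (1 + ∑ c ∈ (G.neighborFinset v).erase p, w v c / q * κ c / (w v c / q + κ c)) *
        fMeasure G.Adj w q {f | f v = none ∧ f ∈ S} := by
  rw [fMeasure_eq_none_add_sum_some v, add_mul, one_mul, Finset.sum_mul]
  congr 1
  · congr 1
    ext f
    simp only [Set.mem_ofPred_eq]
    exact ⟨fun h => ⟨h.1, h.2.2⟩, fun h => ⟨h.1, by simp [h.1], h.2⟩⟩
  rw [← Finset.sum_subset (Finset.subset_univ ((G.neighborFinset v).erase p))]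
  · refine Finset.sum_congr rfl fun c hc => ?_
    obtain ⟨hcp, hvc⟩ := Finset.mem_erase.1 hc
    rw [SimpleGraph.mem_neighborFinset] at hvc
    have hsub := branch_ssubset_branch hG hpv hvc hcp
    have hpair : {v, c} ⊆ branch G p v :=
      Set.pair_subset (mem_branch_self hpv) (hsub.subset (mem_branch_self hvc))
    rw [← fMeasure_eq_some_of_ne_some hG hsymm hw hq hvc (hS.mono (Set.compl_subset_compl.2 hpair))
      (hκ c) (hbranch c hc _ (dependsOn_eq_none_and hS hsub.subset (left_notMem_branch v c)))]
    congr 1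
    ext f
    simp only [Set.mem_ofPred_eq]
    exact ⟨fun h => ⟨h.1, h.2.2⟩, fun h => ⟨h.1, by simp [h.1, hcp], h.2⟩⟩
  · refine fun c _ hc => fMeasure_eq_zero fun f hf hfc => hc (Finset.mem_erase.2 ⟨?_, ?_⟩)
    · rintro rfl
      exact hfc.2.1 hfc.1
    · exact (G.mem_neighborFinset v c).2 (hf.2 v c hfc.1)

theorem fMeasure_ne_some {p v : V} (hpv : G.Adj p v)
    {S : Set (V → Option V)} (hS : DependsOn (· ∈ S) (branch G p v)ᶜ) :
    fMeasure G.Adj w q {f | f v ≠ some p ∧ f ∈ S} =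
      branchConductance G w q p v * fMeasure G.Adj w q {f | f v = none ∧ f ∈ S} := by
  induction hm : (branch G p v).ncard using Nat.strong_induction_on generalizing p v S with
  | _ m ih =>
  subst hm
  have hrec := fun S hS => fMeasure_ne_some_of_forall (S := S) hG hsymm hw hq hpv
    (branchConductance_pos hw hq v) (fun c hc S hS => by
      obtain ⟨hcp, hvc⟩ := Finset.mem_erase.1 hc
      rw [SimpleGraph.mem_neighborFinset] at hvc
      exact ih _ (Set.ncard_lt_ncard (branch_ssubset_branch hG hpv hvc hcp)) hvc hS rfl) hS
  have huniv := hrec Set.univ fun _ _ _ => rfl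
  simp only [Set.mem_univ, and_true] at huniv
  rw [hrec S hS, branchConductance, huniv,
    mul_div_cancel_right₀ _ (fMeasure_pos hw hq (by rfl)).ne']

theorem branchConductance_eq {p v : V} (hpv : G.Adj p v) :
    branchConductance G w q p v = 1 + ∑ c ∈ (G.neighborFinset v).erase p,
      w v c / q * branchConductance G w q v c / (w v c / q + branchConductance G w q v c) := by
  have h := fMeasure_ne_some_of_forall (S := Set.univ) hG hsymm hw hq hpv
    (branchConductance_pos hw hq v) (fun c hc S hS => fMeasure_ne_some hG hsymm hw hq
      ((G.mem_neighborFinset v c).1 (Finset.mem_of_mem_erase hc)) hS) fun _ _ _ => rfl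
  simp only [Set.mem_univ, and_true] at h
  rw [branchConductance, h, mul_div_cancel_right₀ _ (fMeasure_pos hw hq (by rfl)).ne']

end Conductance

section Correlation

variable {V : Type*} [Fintype V] [DecidableEq V] {G : SimpleGraph V} {w : V → V → ℝ} {q : ℝ}

theorem fMeasure_not_sameTree (hG : G.IsAcyclic) {x y : V} (hxy : G.Adj x y) :
    fMeasure G.Adj w q {f | ¬ SameTree f x y} =
      fMeasure G.Adj w q {f | f x ≠ some y ∧ f y ≠ some x} := by
  refine fMeasure_congr fun f hf => ⟨fun h => ⟨fun hx => h ?_, fun hy => h ?_⟩, fun h hsame => ?_⟩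
  · exact ⟨y, .single hx, .refl⟩
  · exact ⟨x, .refl, .single hy⟩
  · exact (eq_some_of_sameTree hG hf.2 hxy hsame).elim h.1 h.2

theorem Zf_eq_add (hG : G.IsTree) (x y : V) :
    Zf G.Adj w q = fMeasure G.Adj w q {f | f x = some y} + fMeasure G.Adj w q {f | f y = some x} +
      fMeasure G.Adj w q {f | f x ≠ some y ∧ f y ≠ some x} := by
  have hx := fMeasure_add_not (E := G.Adj) (w := w) (q := q) (fun f => f x = some y) Set.univ
  have hy := fMeasure_add_not (E := G.Adj) (w := w) (q := q) (fun f => f y = some x)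
    {f | f x ≠ some y}
  simp only [Set.mem_univ, and_true, Set.mem_ofPred_eq, ← ne_eq, and_comm (a := _ ≠ some x)]
    at hx hy
  rw [Zf, ← hx, ← hy, ← add_assoc]
  congr 2
  exact fMeasure_congr fun f hf =>
    ⟨And.left, fun h => ⟨h, ((isRForest_adj_iff hG).1 hf y x h).2⟩⟩

variable (hG : G.IsTree) (hsymm : ∀ u v, w u v = w v u) (hw : ∀ u v, G.Adj u v → 0 ≤ w u v)
  (hq : 0 < q)

include hG hsymm hw hq

theorem fMeasure_eq_some_eq_mul {x y : V} (hxy : G.Adj x y) :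
    fMeasure G.Adj w q {f | f x = some y} = w x y / q / branchConductance G w q y x *
      fMeasure G.Adj w q {f | f x ≠ some y ∧ f y ≠ some x} := by
  have hdep : DependsOn (· ∈ {f : V → Option V | f y ≠ some x}) (branch G y x)ᶜ := fun f g hfg =>
    congrArg (· ≠ some x) (hfg y (left_notMem_branch y x))
  have hedge := fMeasure_eq_some (w := w) (S := Set.univ) hG hq.ne' hxy fun _ _ _ => rfl
  have hcut := fMeasure_ne_some hG hsymm hw hq hxy.symm hdep
  simp only [Set.mem_univ, and_true, Set.mem_ofPred_eq, and_comm (b := _ = none)] at hedge hcut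
  rw [hedge, hcut, ← mul_assoc, div_mul_cancel₀ _ (branchConductance_pos hw hq y x).ne']

theorem inv_Ucorr {x y : V} (hxy : G.Adj x y) :
    (Ucorr G.Adj w q x y)⁻¹ =
      1 + (w x y / q / branchConductance G w q x y + w x y / q / branchConductance G w q y x) := by
  have hpos : 0 < fMeasure G.Adj w q {f | f x ≠ some y ∧ f y ≠ some x} :=
    fMeasure_pos hw hq (by simp)
  have hyx := fMeasure_eq_some_eq_mul hG hsymm hw hq hxy.symm
  simp only [and_comm (a := _ ≠ some x), hsymm y x] at hyx
  rw [Ucorr, fProb, fMeasure_not_sameTree hG.isAcyclic hxy, inv_div, div_eq_iff hpos.ne',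
    Zf_eq_add hG x y, hyx, fMeasure_eq_some_eq_mul hG hsymm hw hq hxy]
  ring

end Correlation

section Generations

variable {V : Type*} [Fintype V] {G : SimpleGraph V} {a p v : V} {d k : ℕ}

/-- The neighbours of `v` in the generation following that of `v`, where the generation of a
vertex is its distance to the ancestor `a`. -/
noncomputable def children (G : SimpleGraph V) (a v : V) : Finset V :=
  Finset.univ.filter fun u : V => G.Adj v u ∧ G.dist a u = G.dist a v + 1

/-- The largest generation of a vertex, counted from the ancestor `a`. -/
noncomputable def treeHeight (G : SimpleGraph V) (a : V) : ℕ :=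
  Finset.univ.sup fun u : V => G.dist a u

/-- `d`-regularity of `G` with respect to the ancestor `a`: every vertex of generation less than the
height of the tree has exactly `d` children. -/
def IsRegularTree (G : SimpleGraph V) (a : V) (d : ℕ) : Prop :=
  ∀ v : V, G.dist a v < treeHeight G a → (children G a v).card = d

theorem mem_children : v ∈ children G a p ↔ G.Adj p v ∧ G.dist a v = G.dist a p + 1 := by
  simp [children]

theorem dist_le_treeHeight (G : SimpleGraph V) (a v : V) : G.dist a v ≤ treeHeight G a :=
  Finset.le_sup (f := fun u => G.dist a u) (Finset.mem_univ v)

theorem children_subset_neighborFinset : children G a v ⊆ G.neighborFinset v := fun u hu => by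
  rw [SimpleGraph.mem_neighborFinset]
  exact (mem_children.1 hu).1

theorem neighborFinset_erase_eq_children [DecidableEq V] (hG : G.IsTree)
    (hv : v ∈ children G a p) : (G.neighborFinset v).erase p = children G a v := by
  obtain ⟨hpv, hdist⟩ := mem_children.1 hv
  ext c
  rw [Finset.mem_erase, SimpleGraph.mem_neighborFinset, mem_children]
  constructor
  · rintro ⟨hcp, hvc⟩
    refine ⟨hvc, (hG.dist_eq_dist_add_one_of_adj a hvc).resolve_left fun h => hcp ?_⟩
    exact eq_of_adj_of_dist_eq_add_one hG hvc.symm hpv h hdist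
  · rintro ⟨hvc, h⟩
    exact ⟨by rintro rfl; omega, hvc⟩

theorem exists_children_eq_empty (hG : G.Connected) (a v : V) :
    ∃ z, children G a z = ∅ ∧ G.dist a z = G.dist a v + G.dist v z := by
  obtain ⟨z, hz, hmax⟩ := Finset.exists_max_image
    (univ.filter fun z => G.dist a z = G.dist a v + G.dist v z) (G.dist a) ⟨v, by simp⟩
  simp only [Finset.mem_filter, Finset.mem_univ, true_and] at hz hmax
  refine ⟨z, Finset.eq_empty_of_forall_notMem fun c hc => ?_, hz⟩
  obtain ⟨hzc, hdist⟩ := mem_children.1 hc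
  have hvc : G.dist v c ≤ G.dist v z + G.dist z c := hG.dist_triangle
  have hac : G.dist a c ≤ G.dist a v + G.dist v c := hG.dist_triangle
  rw [SimpleGraph.dist_eq_one_iff_adj.2 hzc] at hvc
  have := hmax c (by omega)
  omega

namespace IsRegularTree

theorem card_children_le (h : IsRegularTree G a d) (v : V) : (children G a v).card ≤ d := by
  rcases (dist_le_treeHeight G a v).lt_or_eq with hlt | heq
  · exact (h v hlt).le
  · suffices children G a v = ∅ by simp [this]
    refine Finset.eq_empty_of_forall_notMem fun c hc => ?_
    have := dist_le_treeHeight G a c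
    have := (mem_children.1 hc).2
    omega

theorem pos_of_mem_children (h : IsRegularTree G a d) (hv : v ∈ children G a p) : 0 < d :=
  (Finset.card_pos.2 ⟨v, hv⟩).trans_le (h.card_children_le p)

theorem treeHeight_eq (h : IsRegularTree G a d) (hG : G.Connected) (hd : 0 < d)
    (hk : IsLeast {m | ∃ u, (children G a u).card = 0 ∧ G.dist v u = m} k) :
    treeHeight G a = G.dist a v + k := by
  obtain ⟨⟨u, hu, hvu⟩, hmin⟩ := hk
  apply le_antisymm
  · have hlast : treeHeight G a ≤ G.dist a u := by
      by_contra! hlt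
      exact hd.ne' ((h u hlt).symm.trans hu)
    exact hlast.trans (hvu ▸ hG.dist_triangle)
  · obtain ⟨z, hz, hdist⟩ := exists_children_eq_empty hG a v
    have hkz : k ≤ G.dist v z := hmin ⟨z, by simp [hz], rfl⟩
    have := dist_le_treeHeight G a z
    omega

end IsRegularTree

end Generations

section Bounds

theorem mul_div_add_le {τ κ : ℝ} (hτ : 0 ≤ τ) (hκ : 0 < κ) : τ * κ / (τ + κ) ≤ κ := by
  rw [div_le_iff₀ (by positivity)]
  nlinarith [sq_nonneg κ]

theorem div_one_add_le_mul_div_add {t τ κ α : ℝ} (ht : 0 ≤ t) (htτ : t ≤ τ) (hκ : 0 < κ)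
    (hα : t / κ ≤ α) : t / (1 + α) ≤ τ * κ / (τ + κ) :=
  have hτ : 0 ≤ τ := ht.trans htτ
  calc t / (1 + α) ≤ t / (1 + t / κ) := by gcongr
    _ = t * κ / (t + κ) := by field_simp; ring
    _ ≤ τ * κ / (τ + κ) := by
      rw [div_le_div_iff₀ (by positivity) (by positivity)]
      nlinarith [mul_le_mul_of_nonneg_right htτ (sq_nonneg κ)]

theorem geom_sum_le_mul_pow {d : ℕ} (hd : 0 < d) (k : ℕ) :
    ∑ i ∈ Finset.range (k + 1), (d : ℝ) ^ i ≤ (k + 1) * (d : ℝ) ^ k :=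
  calc ∑ i ∈ Finset.range (k + 1), (d : ℝ) ^ i ≤ ∑ _i ∈ Finset.range (k + 1), (d : ℝ) ^ k :=
        Finset.sum_le_sum fun i hi => pow_le_pow_right₀ (Nat.one_le_cast.2 hd)
          (Nat.lt_succ_iff.1 (Finset.mem_range.1 hi))
    _ = (k + 1) * (d : ℝ) ^ k := by simp

theorem le_two_div_add {D α β : ℝ} (hD : 2 ≤ D) (hα : 0 ≤ α) (h : (D - 1) * β ≤ 1 + α) :
    β ≤ 2 / D + α :=
  calc β ≤ (1 + α) / (D - 1) := (le_div_iff₀' (by linarith)).2 h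
    _ ≤ (1 + α) / (D / 2) := by gcongr; linarith
    _ = 2 / D + α * (2 / D) := by field_simp
    _ ≤ 2 / D + α := by
      gcongr
      exact mul_le_of_le_one_right hα ((div_le_one (by linarith)).2 hD)

-- With `s` the `(k + 1)`-st root of `ρ`, the first hypothesis is used for `D ≤ s⁻¹` and the second
-- for `D ≥ s⁻¹`.
theorem le_mul_rpow_inv_add {A D ρ : ℝ} {k : ℕ} (hD : 0 < D) (hρ : 0 ≤ ρ) (hpow : A ≤ ρ * D ^ k)
    (hdiv : A ≤ (k + 1) / D + ρ) : A ≤ (k + 1) * ρ ^ (((k + 1 : ℕ) : ℝ)⁻¹) + ρ := by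
  have hs := Real.rpow_nonneg hρ (((k + 1 : ℕ) : ℝ)⁻¹)
  have hsρ := Real.rpow_inv_natCast_pow hρ k.succ_ne_zero
  set s := ρ ^ (((k + 1 : ℕ) : ℝ)⁻¹)
  rcases le_total (s * D) 1 with h | h
  · calc A ≤ ρ * D ^ k := hpow
      _ = s * (s * D) ^ k := by rw [← hsρ, Nat.succ_eq_add_one]; ring
      _ ≤ s := mul_le_of_le_one_right hs (pow_le_one₀ (by positivity) h)
      _ ≤ (k + 1) * s := le_mul_of_one_le_left hs (by simp)
      _ ≤ (k + 1) * s + ρ := le_add_of_nonneg_right hρ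
  · refine hdiv.trans (add_le_add_left ?_ _)
    rw [div_le_iff₀ hD, mul_assoc]
    exact le_mul_of_one_le_right (by positivity) h

variable {V : Type*} [Fintype V] [DecidableEq V] {G : SimpleGraph V} {w : V → V → ℝ} {q t : ℝ}
  {a p v x y : V} {d k m : ℕ}

variable (hG : G.IsTree) (hsymm : ∀ u v, w u v = w v u) (hw : ∀ u v, G.Adj u v → 0 ≤ w u v)
  (hq : 0 < q)

include hG hsymm hw hq

theorem branchConductance_le_geom_sum (hcard : ∀ u, (children G a u).card ≤ d)
    (hv : v ∈ children G a p) {j : ℕ} (hheight : ∀ u, G.dist a u < G.dist a v + j) :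
    branchConductance G w q p v ≤ ∑ i ∈ Finset.range j, (d : ℝ) ^ i := by
  induction j generalizing p v with
  | zero => simpa using hheight v
  | succ j ih =>
    rw [branchConductance_eq hG hsymm hw hq (mem_children.1 hv).1,
      neighborFinset_erase_eq_children hG hv, geom_sum_succ, add_comm]
    refine add_le_add_left ?_ 1
    have hchild : ∀ c ∈ children G a v,
        w v c / q * branchConductance G w q v c / (w v c / q + branchConductance G w q v c) ≤
          ∑ i ∈ Finset.range j, (d : ℝ) ^ i := fun c hc => by
      obtain ⟨hvc, hdist⟩ := mem_children.1 hc
      refine (mul_div_add_le (div_nonneg (hw v c hvc) hq.le)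
        (branchConductance_pos hw hq v c)).trans (ih hc fun u => ?_)
      have := hheight u
      omega
    refine (Finset.sum_le_card_nsmul _ _ _ hchild).trans ?_
    rw [nsmul_eq_mul]
    gcongr
    exact hcard v

theorem card_mul_div_branchConductance_le (hpv : G.Adj p v) (ht : 0 ≤ t)
    {C : Finset V} (hC : C ⊆ (G.neighborFinset v).erase p) (hτ : ∀ c ∈ C, t ≤ w v c / q)
    {α : ℝ} (hα : 0 ≤ α) (hκ : ∀ c ∈ C, t / branchConductance G w q v c ≤ α) :
    C.card * (t / branchConductance G w q p v) ≤ 1 + α := by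
  set σ : V → ℝ := fun c =>
    w v c / q * branchConductance G w q v c / (w v c / q + branchConductance G w q v c)
  have hσ : ∀ c ∈ (G.neighborFinset v).erase p, 0 ≤ σ c := fun c hc => by
    have hτc : 0 ≤ w v c / q :=
      div_nonneg (hw v c ((G.mem_neighborFinset v c).1 (Finset.mem_of_mem_erase hc))) hq.le
    have hκc := branchConductance_pos hw hq v c
    positivity
  have hsum : C.card * (t / (1 + α)) ≤ branchConductance G w q p v :=
    calc C.card * (t / (1 + α)) ≤ ∑ c ∈ C, σ c := by
          rw [← nsmul_eq_mul]
          exact Finset.card_nsmul_le_sum _ _ _ fun c hc => div_one_add_le_mul_div_add ht (hτ c hc)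
            (branchConductance_pos hw hq v c) (hκ c hc)
      _ ≤ ∑ c ∈ (G.neighborFinset v).erase p, σ c :=
          Finset.sum_le_sum_of_subset_of_nonneg hC fun c hc _ => hσ c hc
      _ ≤ branchConductance G w q p v := by
          rw [branchConductance_eq hG hsymm hw hq hpv]
          exact le_add_of_nonneg_left zero_le_one
  rw [mul_div_assoc', div_le_iff₀ (by positivity)] at hsum
  rw [mul_div_assoc', div_le_iff₀ (branchConductance_pos hw hq p v)]
  linarith

theorem div_branchConductance_le (hd : 0 < d) (ht : 0 ≤ t)
    (hcard : ∀ u, G.dist a u < m → d ≤ (children G a u).card)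
    (hτ : ∀ u, ∀ c ∈ children G a u, k ≤ G.dist a u → t ≤ w u c / q)
    (hv : v ∈ children G a p) (hkv : k ≤ G.dist a v) {j : ℕ} (hvm : G.dist a v + j ≤ m) :
    t / branchConductance G w q p v ≤ j / d + t / d ^ j := by
  induction j generalizing p v with
  | zero => simpa using div_le_self ht (one_le_branchConductance hw hq p v)
  | succ j ih =>
    have hd' : (1 : ℝ) ≤ d := Nat.one_le_cast.2 hd
    have hchildren := card_mul_div_branchConductance_le (α := j / d + t / d ^ j) hG hsymm hw hq
      (mem_children.1 hv).1 ht (neighborFinset_erase_eq_children hG hv).ge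
      (fun c hc => hτ v c hc hkv) (by positivity) fun c hc => by
        have hdist := (mem_children.1 hc).2
        exact ih hc (by omega) (by omega)
    have hdκ : d * (t / branchConductance G w q p v) ≤ 1 + (j / d + t / d ^ j) := by
      refine le_trans ?_ hchildren
      have hκ := branchConductance_pos hw hq p v
      gcongr
      exact hcard v (by omega)
    calc t / branchConductance G w q p v ≤ (1 + (j / d + t / d ^ j)) / d := by
          rwa [le_div_iff₀' (by positivity)]
      _ ≤ (1 + (j + t / d ^ j)) / d := by
          gcongr
          exact div_le_self (by positivity) hd'
      _ = ↑(j + 1) / d + t / d ^ (j + 1) := by push_cast; field_simp; ring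

end Bounds

section Estimates

variable {V : Type*} [Fintype V] [DecidableEq V] {G : SimpleGraph V} {w : V → V → ℝ} {q : ℝ}
  {a x y : V} {d k : ℕ}

theorem div_add_div_branchConductance_le_two_mul (hw : ∀ u v, G.Adj u v → 0 ≤ w u v) (hq : 0 < q)
    (hxy : G.Adj x y) :
    w x y / q / branchConductance G w q x y + w x y / q / branchConductance G w q y x ≤
      2 * (w x y / q) := by
  have hτ : 0 ≤ w x y / q := div_nonneg (hw x y hxy) hq.le
  rw [two_mul]
  exact add_le_add (div_le_self hτ (one_le_branchConductance hw hq x y))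
    (div_le_self hτ (one_le_branchConductance hw hq y x))

variable (hG : G.IsTree) (hsymm : ∀ u v, w u v = w v u) (hw : ∀ u v, G.Adj u v → 0 ≤ w u v)
  (hq : 0 < q)

include hG hsymm hw hq

theorem one_le_inv_Ucorr (hxy : G.Adj x y) :
    1 ≤ (Ucorr G.Adj w q x y)⁻¹ := by
  have hτ : 0 ≤ w x y / q := div_nonneg (hw x y hxy) hq.le
  have hy := branchConductance_pos hw hq x y
  have hx := branchConductance_pos hw hq y x
  rw [inv_Ucorr hG hsymm hw hq hxy]
  exact le_add_of_nonneg_right (by positivity)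

theorem Ucorr_mul_le_branchConductance (hxy : G.Adj x y) :
    Ucorr G.Adj w q x y * (w x y / q) ≤ branchConductance G w q x y := by
  have hτ : 0 ≤ w x y / q := div_nonneg (hw x y hxy) hq.le
  have hy := branchConductance_pos hw hq x y
  have hx : 0 ≤ w x y / q / branchConductance G w q y x :=
    div_nonneg hτ (branchConductance_pos hw hq y x).le
  have hU : 0 < (Ucorr G.Adj w q x y)⁻¹ :=
    one_pos.trans_le (one_le_inv_Ucorr hG hsymm hw hq hxy)
  rw [← inv_inv (Ucorr G.Adj w q x y), inv_mul_le_iff₀ hU, ← div_le_iff₀ hy,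
    inv_Ucorr hG hsymm hw hq hxy]
  linarith

theorem Ucorr_mul_le (hreg : IsRegularTree G a d)
    (hy : y ∈ children G a x)
    (hk : IsLeast {m | ∃ u, (children G a u).card = 0 ∧ G.dist y u = m} k) :
    Ucorr G.Adj w q x y * (w x y / (d : ℝ) ^ k) ≤ (k + 1) * q := by
  have hd := hreg.pos_of_mem_children hy
  have hheight : ∀ u, G.dist a u < G.dist a y + (k + 1) := fun u => by
    have hu := dist_le_treeHeight G a u
    rw [hreg.treeHeight_eq hG.connected hd hk] at hu
    omega
  have hle := calc Ucorr G.Adj w q x y * (w x y / q)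
      _ ≤ branchConductance G w q x y :=
        Ucorr_mul_le_branchConductance hG hsymm hw hq (mem_children.1 hy).1
      _ ≤ ∑ i ∈ Finset.range (k + 1), (d : ℝ) ^ i :=
        branchConductance_le_geom_sum hG hsymm hw hq hreg.card_children_le hy hheight
      _ ≤ (k + 1) * (d : ℝ) ^ k := geom_sum_le_mul_pow hd k
  rw [mul_div_assoc', div_le_iff₀ (by positivity)] at hle ⊢
  linarith

theorem card_children_sub_one_mul_le (hy : y ∈ children G a x) {t α : ℝ}
    (ht : 0 ≤ t) (hα : 0 ≤ α) (hτ : ∀ c ∈ children G a x, t ≤ w x c / q)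
    (hκ : ∀ c ∈ children G a x, t / branchConductance G w q x c ≤ α) :
    ((children G a x).card - 1 : ℝ) * (t / branchConductance G w q y x) ≤ 1 + α := by
  rw [← Nat.cast_pred (Finset.card_pos.2 ⟨y, hy⟩), ← Finset.card_erase_of_mem hy]
  exact card_mul_div_branchConductance_le hG hsymm hw hq (mem_children.1 hy).1.symm ht
    (Finset.erase_subset_erase y children_subset_neighborFinset)
    (fun c hc => hτ c (Finset.mem_of_mem_erase hc)) hα
    fun c hc => hκ c (Finset.mem_of_mem_erase hc)

theorem div_add_div_branchConductance_le (hd : 2 ≤ d)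
    (hcard : ∀ u, G.dist a u < G.dist a y + k → (children G a u).card = d)
    (hy : y ∈ children G a x)
    (hmin : ∀ u, ∀ v ∈ children G a u, G.dist a y ≤ G.dist a v → w x y ≤ w u v) :
    w x y / q / branchConductance G w q x y + w x y / q / branchConductance G w q y x ≤
      2 * ((k + 1) / d + w x y / q / d ^ k) := by
  obtain ⟨hxy, hdist⟩ := mem_children.1 hy
  have hτ : 0 ≤ w x y / q := div_nonneg (hw x y hxy) hq.le
  have hτmin : ∀ u, ∀ c ∈ children G a u, G.dist a x ≤ G.dist a u → w x y / q ≤ w u c / q :=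
    fun u c hc hu => by
      have hle : G.dist a y ≤ G.dist a c := by rw [hdist, (mem_children.1 hc).2]; omega
      gcongr
      exact hmin u c hc hle
  set α : ℝ := k / d + w x y / q / d ^ k with hα
  have hchild : ∀ c ∈ children G a x, w x y / q / branchConductance G w q x c ≤ α :=
    fun c hc => by
      have hc' := (mem_children.1 hc).2
      exact div_branchConductance_le hG hsymm hw hq (by omega) hτ (fun u hu => (hcard u hu).ge)
        hτmin hc (by omega) (by omega)
  have hsiblings := card_children_sub_one_mul_le hG hsymm hw hq hy hτ (by positivity)
    (fun c hc => hτmin x c hc le_rfl) hchild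
  rw [hcard x (by omega)] at hsiblings
  calc w x y / q / branchConductance G w q x y + w x y / q / branchConductance G w q y x
      ≤ α + (2 / d + α) := add_le_add (hchild y hy)
        (le_two_div_add (Nat.ofNat_le_cast.2 hd) (by positivity) hsiblings)
    _ = 2 * ((k + 1) / d + w x y / q / d ^ k) := by rw [hα]; ring

theorem inv_Ucorr_le (hreg : IsRegularTree G a d)
    (hy : y ∈ children G a x)
    (hk : IsLeast {m | ∃ u, (children G a u).card = 0 ∧ G.dist y u = m} k)
    (hmin : ∀ u, ∀ v ∈ children G a u, G.dist a y ≤ G.dist a v → w x y ≤ w u v) :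
    (Ucorr G.Adj w q x y)⁻¹ ≤ 1 + 2 * ((k + 1) *
      (w x y / (d : ℝ) ^ k / q) ^ (((k + 1 : ℕ) : ℝ)⁻¹) + w x y / (d : ℝ) ^ k / q) := by
  have hxy := (mem_children.1 hy).1
  have hd := hreg.pos_of_mem_children hy
  have hd' : (0 : ℝ) < d := Nat.cast_pos.2 hd
  have hτ : 0 ≤ w x y / q := div_nonneg (hw x y hxy) hq.le
  have htrivial := div_add_div_branchConductance_le_two_mul hw hq hxy
  rw [inv_Ucorr hG hsymm hw hq hxy, div_right_comm (w x y) _ q]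
  refine add_le_add_right ((div_le_iff₀' two_pos).1 ?_) 1
  refine le_mul_rpow_inv_add hd' (by positivity) ?_ ?_
  · rw [div_mul_cancel₀ _ (by positivity), div_le_iff₀' two_pos]
    exact htrivial
  · rw [div_le_iff₀' two_pos]
    rcases Nat.lt_or_ge 1 d with hd2 | hd1
    · refine div_add_div_branchConductance_le hG hsymm hw hq hd2 (fun u hu => hreg u ?_) hy hmin
      rwa [hreg.treeHeight_eq hG.connected hd hk]
    · obtain rfl : d = 1 := le_antisymm hd1 hd
      refine htrivial.trans ?_
      simp only [Nat.cast_one, one_pow, div_one]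
      linarith [(Nat.cast_nonneg k : (0 : ℝ) ≤ k)]

end Estimates

section Asymptotics

open Filter Asymptotics

variable {ι : Type*} {l : Filter ι} {V : ι → Type*} [∀ n, Fintype (V n)] [∀ n, DecidableEq (V n)]

theorem regular_hierarchical_tree_asymptotics_general
    (G : ∀ n, SimpleGraph (V n)) (htree : ∀ n, (G n).IsTree)
    (a : ∀ n, V n) (w : ∀ n, V n → V n → ℝ) (hsymm : ∀ n u v, w n u v = w n v u)
    (hnonneg : ∀ n u v, (G n).Adj u v → 0 ≤ w n u v)
    (d : ι → ℕ) (hreg : ∀ n, IsRegularTree (G n) (a n) (d n))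
    (x y : ∀ n, V n) (hy : ∀ n, y n ∈ children (G n) (a n) (x n)) (k : ℕ)
    (hk : ∀ n, IsLeast {m | ∃ v, (children (G n) (a n) v).card = 0 ∧ (G n).dist (y n) v = m} k)
    (q : ι → ℝ) (hq : ∀ n, 0 < q n) :
    ((q =o[l] fun n => w n (x n) (y n) / (d n : ℝ) ^ k) →
      Tendsto (fun n => Ucorr (G n).Adj (w n) (q n) (x n) (y n)) l (nhds 0)) ∧
    (((fun n => w n (x n) (y n) / (d n : ℝ) ^ k) =o[l] q) →
      (∀ n u, ∀ v ∈ children (G n) (a n) u,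
        (G n).dist (a n) (y n) ≤ (G n).dist (a n) v → w n (x n) (y n) ≤ w n u v) →
      Tendsto (fun n => Ucorr (G n).Adj (w n) (q n) (x n) (y n)) l (nhds 1)) := by
  have hU := fun n => one_le_inv_Ucorr (htree n) (hsymm n) (hnonneg n) (hq n)
    (mem_children.1 (hy n)).1
  refine ⟨fun hsmall => ?_, fun hlarge hmin => ?_⟩
  · have hlim := hsmall.tendsto_div_nhds_zero.const_mul ((k : ℝ) + 1)
    rw [mul_zero] at hlim
    refine squeeze_zero' (.of_forall fun n => inv_nonneg.1 (zero_le_one.trans (hU n))) ?_ hlim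
    filter_upwards [hsmall.isBigO.eq_zero_imp] with n hn
    have hpos := (div_nonneg (hnonneg n _ _ (mem_children.1 (hy n)).1)
      (pow_nonneg (d n).cast_nonneg k)).lt_of_ne' fun h => (hq n).ne' (hn h)
    rw [mul_div_assoc', le_div_iff₀ hpos]
    exact Ucorr_mul_le (htree n) (hsymm n) (hnonneg n) (hq n) (hreg n) (hy n) (hk n)
  · have hρ := hlarge.tendsto_div_nhds_zero
    have hroot := hρ.rpow_const (p := ((k + 1 : ℕ) : ℝ)⁻¹) (.inr (by positivity))
    rw [Real.zero_rpow (by positivity)] at hroot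
    have hlim := (((hroot.const_mul ((k : ℝ) + 1)).add hρ).const_mul 2).const_add 1
    simp only [mul_zero, add_zero] at hlim
    simpa using (tendsto_of_tendsto_of_tendsto_of_le_of_le tendsto_const_nhds hlim hU fun n =>
      inv_Ucorr_le (htree n) (hsymm n) (hnonneg n) (hq n) (hreg n) (hy n) (hk n) (hmin n)).inv₀
      one_ne_zero

end Asymptotics

open Filter Asymptotics in
/-- **Asymptotic detection of layers in a regular hierarchical weighted tree.**
For each `n`, `G_n` is an undirected `d_n`-regular tree with ancestor `a_n` and
hierarchical (symmetric, nonnegative) edge weights `w_n`: edges in the same generation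
have equal weight and weights are non-decreasing in the generation. `x_n` is the parent of
`y_n`, and the minimal distance between `y_n` and a leaf of `G_n` (a vertex without
children) is the constant `k`. Then `U_{q_n}(x_n,y_n) → 0` if
`q_n = o(d_n^{-k} w_n(e_n))` and `U_{q_n}(x_n,y_n) → 1` if `q_n = ω(d_n^{-k} w_n(e_n))`,
where `e_n` is the edge between `x_n` and `y_n`. -/
theorem regular_hierarchical_tree_asymptotics
    (V : ℕ → Type) [∀ n, Fintype (V n)] [∀ n, DecidableEq (V n)]
    (G : ∀ n, SimpleGraph (V n)) (htree : ∀ n, (G n).IsTree)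
    (a : ∀ n, V n) (w : ∀ n, V n → V n → ℝ)
    (hsymm : ∀ n (u v : V n), w n u v = w n v u)
    (hnonneg : ∀ n (u v : V n), (G n).Adj u v → 0 ≤ w n u v)
    (hsame : ∀ n (u v u' v' : V n), (G n).Adj u v → (G n).Adj u' v' →
      (G n).dist (a n) v = (G n).dist (a n) u + 1 →
      (G n).dist (a n) v' = (G n).dist (a n) u' + 1 →
      (G n).dist (a n) v = (G n).dist (a n) v' → w n u v = w n u' v')
    (hmono : ∀ n (u v u' v' : V n), (G n).Adj u v → (G n).Adj u' v' →
      (G n).dist (a n) v = (G n).dist (a n) u + 1 →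
      (G n).dist (a n) v' = (G n).dist (a n) u' + 1 →
      (G n).dist (a n) v ≤ (G n).dist (a n) v' → w n u v ≤ w n u' v')
    (d : ℕ → ℕ)
    (hreg : ∀ n (v : V n),
      (G n).dist (a n) v < Finset.univ.sup (fun u : V n => (G n).dist (a n) u) →
      (Finset.univ.filter fun u : V n =>
        (G n).Adj v u ∧ (G n).dist (a n) u = (G n).dist (a n) v + 1).card = d n)
    (x y : ∀ n, V n)
    (hadj : ∀ n, (G n).Adj (x n) (y n))
    (hparent : ∀ n, (G n).dist (a n) (y n) = (G n).dist (a n) (x n) + 1)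
    (k : ℕ)
    (hleafdist : ∀ n, IsLeast {m : ℕ | ∃ v : V n,
      (Finset.univ.filter fun u : V n =>
        (G n).Adj v u ∧ (G n).dist (a n) u = (G n).dist (a n) v + 1).card = 0 ∧
      (G n).dist (y n) v = m} k)
    (q : ℕ → ℝ) (hq : ∀ n, 0 < q n) :
    ((q =o[atTop] fun n => w n (x n) (y n) / (d n : ℝ) ^ k) →
      Tendsto (fun n => Ucorr (G n).Adj (w n) (q n) (x n) (y n)) atTop (nhds 0)) ∧
    (((fun n => w n (x n) (y n) / (d n : ℝ) ^ k) =o[atTop] q) →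
      Tendsto (fun n => Ucorr (G n).Adj (w n) (q n) (x n) (y n)) atTop (nhds 1)) := by
  have hy : ∀ n, y n ∈ children (G n) (a n) (x n) := fun n => mem_children.2 ⟨hadj n, hparent n⟩
  refine (regular_hierarchical_tree_asymptotics_general G htree a w hsymm hnonneg d hreg x y hy k
    hleafdist q hq).imp_right fun hlarge ho => hlarge ho fun n u v hv hle => ?_
  obtain ⟨huv, hdist⟩ := mem_children.1 hv
  exact hmono n _ _ u v (hadj n) huv (hparent n) hdist hle
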